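/- Let N = (1/3)(I + J + J²). For all y,z ∈ ℤ/3ℤ with y ≠ z, the matrix J^z − J^y + N is invertible; consequently, for all η,η' ∈ ℂ and w,x,y,z ∈ ℤ/3ℤ with y ≠ z, if ζ,ζ' ∈ ℂ satisfy (J^z − J^y) · S[ζ,ζ'] = J^x · S[η,η'] − J^w, then S[ζ,ζ'] = M^{wx/yz}[η,η']. -/

import Mathlib

noncomputable def ω : ℂ := Complex.exp (2 * Real.pi * Complex.I / 3)

def J : Matrix (Fin 3) (Fin 3) ℂ := !![0,1,0; 0,0,1; 1,0,0]

noncomputable def W : Matrix (Fin 3) (Fin 3) ℂ := !![1,1,1; 1,ω,ω^2; 1,ω^2,ω]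

/-- generalized cevian operator `S[η,η'] = W ⬝ diag(1,η',η) ⬝ W⁻¹` -/
noncomputable def S (η η' : ℂ) : Matrix (Fin 3) (Fin 3) ℂ :=
  W * Matrix.diagonal ![1, η', η] * W⁻¹

/-- `ω^k` for `k : ZMod 3` (well defined since `ω^3 = 1`). -/
noncomputable def ωz (k : ZMod 3) : ℂ := ω ^ k.val

/-- `J^k` for `k : ZMod 3` (well defined since `J^3 = 1`). -/
def Jz (k : ZMod 3) : Matrix (Fin 3) (Fin 3) ℂ := J ^ k.val

/-- generalized median operator `M^{wx/yz}[η,η']` -/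
noncomputable def M (η η' : ℂ) (w x y z : ZMod 3) : Matrix (Fin 3) (Fin 3) ℂ :=
  S ((η * ωz (-x) - ωz (-w)) / (ωz (-z) - ωz (-y)))
    ((η' * ωz x - ωz w) / (ωz z - ωz y))

/-!
The columns of `W` are common eigenvectors of all the matrices involved, so sums and products are
computed on eigenvalues. The matrix `J ^ z - J ^ y` kills only the first column, on which
every `S ζ ζ'` acts as the identity. Adding the projection `N` onto that column therefore makes
`J ^ z - J ^ y` invertible, while `N * S ζ ζ' = N` shows that the identity still prescribes
`(J ^ z - J ^ y + N) * S ζ ζ'`. The median operator solves the resulting equation, so cancelling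
the invertible factor gives the claim.
-/

section DiagonalConj

variable {R n : Type*} [CommRing R] [Fintype n] [DecidableEq n]

/-- The conjugate `P ⬝ diag(d) ⬝ P⁻¹`, bundled as an algebra homomorphism in `d`: matrices
diagonalized by a common `P` are computed with through their eigenvalues. -/
noncomputable def diagonalConj (P : (Matrix n n R)ˣ) : (n → R) →ₐ[R] Matrix n n R :=
  (MulSemiringAction.toAlgEquiv R (Matrix n n R) (ConjAct.toConjAct P)).toAlgHom.comp
    (Matrix.diagonalAlgHom R)

theorem diagonalConj_apply (P : (Matrix n n R)ˣ) (d : n → R) :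
    diagonalConj P d = (P : Matrix n n R) * Matrix.diagonal d * (↑P⁻¹ : Matrix n n R) :=
  rfl

theorem eq_diagonalConj_iff_mul_eq (P : (Matrix n n R)ˣ) (A : Matrix n n R) (d : n → R) :
    A = diagonalConj P d ↔ A * P = (P : Matrix n n R) * Matrix.diagonal d := by
  rw [diagonalConj_apply, Units.eq_mul_inv_iff_mul_eq]

end DiagonalConj

section Vec3

variable {R : Type*}

theorem vec3_one [One R] : (1 : Fin 3 → R) = ![1, 1, 1] := by
  ext i
  fin_cases i <;> rfl

theorem vec3_mul [Mul R] (a b c a' b' c' : R) :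
    ![a, b, c] * ![a', b', c'] = ![a * a', b * b', c * c'] := by
  ext i
  fin_cases i <;> rfl

theorem vec3_pow [Monoid R] (a b c : R) (k : ℕ) : ![a, b, c] ^ k = ![a ^ k, b ^ k, c ^ k] := by
  ext i
  fin_cases i <;> rfl

end Vec3

theorem one_add_add_sq_eq_zero {R : Type*} [CommRing R] [IsDomain R] {ζ : R}
    (hζ : IsPrimitiveRoot ζ 3) : 1 + ζ + ζ ^ 2 = 0 := by
  simpa [Finset.sum_range_succ] using hζ.geom_sum_eq_zero (by norm_num)

theorem isPrimitiveRoot_ω : IsPrimitiveRoot ω 3 :=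
  Complex.isPrimitiveRoot_exp 3 three_ne_zero

theorem ω_pow_three : ω ^ 3 = 1 :=
  isPrimitiveRoot_ω.pow_eq_one

theorem ω_pow_four : ω ^ 4 = ω := by
  rw [pow_succ, ω_pow_three, one_mul]

theorem ω_inv : ω⁻¹ = ω ^ 2 :=
  inv_eq_of_mul_eq_one_right (by rw [← pow_succ', ω_pow_three])

theorem ωz_injective : Function.Injective ωz := fun a b h =>
  ZMod.val_injective 3 (isPrimitiveRoot_ω.pow_inj a.val_lt b.val_lt h)

theorem ωz_sub_ωz_ne_zero {y z : ZMod 3} (h : y ≠ z) : ωz z - ωz y ≠ 0 :=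
  sub_ne_zero.2 (ωz_injective.ne h.symm)

theorem ωz_add (a b : ZMod 3) : ωz (a + b) = ωz a * ωz b := by
  rw [ωz, ωz, ωz, ZMod.val_add, ← pow_eq_pow_mod _ ω_pow_three, pow_add]

theorem ωz_neg (k : ZMod 3) : ωz (-k) = (ωz k)⁻¹ := by
  refine eq_inv_of_mul_eq_one_left ?_
  rw [← ωz_add, neg_add_cancel, ωz, ZMod.val_zero, pow_zero]

theorem W_eq_vandermonde : W = Matrix.vandermonde fun i : Fin 3 => ω ^ (i : ℕ) := by
  ext i j
  fin_cases i <;> fin_cases j <;> simp [W, Matrix.vandermonde_apply, ← pow_mul, ω_pow_four]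

theorem isUnit_det_W : IsUnit W.det := by
  rw [isUnit_iff_ne_zero, W_eq_vandermonde, Matrix.det_vandermonde_ne_zero_iff]
  exact fun i j h => Fin.ext (isPrimitiveRoot_ω.pow_inj i.is_lt j.is_lt h)

theorem J_mul_W : J * W = W * Matrix.diagonal ![1, ω, ω⁻¹] := by
  have ω_mul_sq : ω * ω ^ 2 = 1 := by rw [← pow_succ', ω_pow_three]
  have ω_sq_mul : ω ^ 2 * ω = 1 := by rw [← pow_succ, ω_pow_three]
  have ω_sq_mul_sq : ω ^ 2 * ω ^ 2 = ω := by rw [← pow_add, ω_pow_four]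
  rw [ω_inv]
  ext i j
  rw [Matrix.mul_diagonal, Matrix.mul_apply, Fin.sum_univ_three]
  fin_cases i <;> fin_cases j <;>
    simp [J, W, ω_mul_sq, ω_sq_mul, ω_sq_mul_sq, ← pow_two]

/-- The matrix with prescribed eigenvalues `d` on the columns of `W`; these matrices are the
circulant ones. -/
noncomputable def ofEigenvalues : (Fin 3 → ℂ) →ₐ[ℂ] Matrix (Fin 3) (Fin 3) ℂ :=
  diagonalConj (W.nonsingInvUnit isUnit_det_W)

theorem S_eq_ofEigenvalues (η η' : ℂ) : S η η' = ofEigenvalues ![1, η', η] :=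
  rfl

theorem J_eq_ofEigenvalues : J = ofEigenvalues ![1, ω, ω⁻¹] :=
  (eq_diagonalConj_iff_mul_eq _ _ _).2 J_mul_W

theorem Jz_eq_ofEigenvalues (k : ZMod 3) : Jz k = ofEigenvalues ![1, ωz k, ωz (-k)] := by
  rw [Jz, J_eq_ofEigenvalues, ← map_pow, vec3_pow, one_pow, inv_pow, ωz_neg, ωz]

/-- The matrix `N` averaging over the cyclic permutations of the coordinates. -/
noncomputable def cyclicMean : Matrix (Fin 3) (Fin 3) ℂ :=
  (1 / 3 : ℂ) • (1 + J + J ^ 2)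

theorem cyclicMean_eq_ofEigenvalues : cyclicMean = ofEigenvalues ![1, 0, 0] := by
  have hω : 1 + ω + ω ^ 2 = 0 := one_add_add_sq_eq_zero isPrimitiveRoot_ω
  have hω_inv : 1 + ω⁻¹ + ω⁻¹ ^ 2 = 0 := one_add_add_sq_eq_zero isPrimitiveRoot_ω.inv
  calc cyclicMean
      = (1 / 3 : ℂ) • (1 + ofEigenvalues ![1, ω, ω⁻¹] + ofEigenvalues ![1, ω, ω⁻¹] ^ 2) := by
        rw [cyclicMean, J_eq_ofEigenvalues]
    _ = ofEigenvalues ((1 / 3 : ℂ) • ![1 + 1 + 1, 1 + ω + ω ^ 2, 1 + ω⁻¹ + ω⁻¹ ^ 2]) := by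
        rw [← map_pow, ← map_one ofEigenvalues, ← map_add, ← map_add, ← map_smul, vec3_pow,
          vec3_one, Matrix.vec3_add, Matrix.vec3_add, one_pow]
    _ = ofEigenvalues ![1, 0, 0] := by
        rw [hω, hω_inv]
        norm_num

theorem S_one_one : S 1 1 = 1 := by
  rw [S_eq_ofEigenvalues, ← vec3_one, map_one]

theorem S_mul_S (a a' b b' : ℂ) : S a a' * S b b' = S (a * b) (a' * b') := by
  simp only [S_eq_ofEigenvalues, ← map_mul, vec3_mul, mul_one]

theorem isUnit_S {η η' : ℂ} (hη : η ≠ 0) (hη' : η' ≠ 0) : IsUnit (S η η') :=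
  .of_mul_eq_one (S η⁻¹ η'⁻¹) (by
    rw [S_mul_S, mul_inv_cancel₀ hη, mul_inv_cancel₀ hη', S_one_one])

theorem cyclicMean_mul_S (η η' : ℂ) : cyclicMean * S η η' = cyclicMean := by
  simp only [cyclicMean_eq_ofEigenvalues, S_eq_ofEigenvalues, ← map_mul, vec3_mul, mul_one,
    zero_mul]

theorem Jz_mul_S_sub_Jz_add_cyclicMean (η η' : ℂ) (w x : ZMod 3) :
    Jz x * S η η' - Jz w + cyclicMean =
      S (η * ωz (-x) - ωz (-w)) (η' * ωz x - ωz w) := by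
  rw [Jz_eq_ofEigenvalues, Jz_eq_ofEigenvalues, cyclicMean_eq_ofEigenvalues, S_eq_ofEigenvalues,
    S_eq_ofEigenvalues, ← map_mul, ← map_sub, ← map_add, vec3_mul]
  simp [mul_comm]

theorem Jz_sub_Jz_add_cyclicMean (y z : ZMod 3) :
    Jz z - Jz y + cyclicMean = S (ωz (-z) - ωz (-y)) (ωz z - ωz y) := by
  simpa [S_one_one] using Jz_mul_S_sub_Jz_add_cyclicMean 1 1 y z

theorem isUnit_Jz_sub_Jz_add_cyclicMean {y z : ZMod 3} (hyz : y ≠ z) :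
    IsUnit (Jz z - Jz y + cyclicMean) := by
  rw [Jz_sub_Jz_add_cyclicMean]
  exact isUnit_S (ωz_sub_ωz_ne_zero (neg_injective.ne hyz)) (ωz_sub_ωz_ne_zero hyz)

theorem Jz_sub_Jz_add_cyclicMean_mul_M (η η' : ℂ) (w x : ZMod 3) {y z : ZMod 3} (hyz : y ≠ z) :
    (Jz z - Jz y + cyclicMean) * M η η' w x y z = Jz x * S η η' - Jz w + cyclicMean := by
  rw [Jz_sub_Jz_add_cyclicMean, Jz_mul_S_sub_Jz_add_cyclicMean, M, S_mul_S,
    mul_div_cancel₀ _ (ωz_sub_ωz_ne_zero (neg_injective.ne hyz)),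
    mul_div_cancel₀ _ (ωz_sub_ωz_ne_zero hyz)]

theorem median_determined_by_identity :
    (∀ y z : ZMod 3, y ≠ z →
      IsUnit (Jz z - Jz y + (1/3 : ℂ) • ((1 : Matrix (Fin 3) (Fin 3) ℂ) + J + J ^ 2))) ∧
    (∀ (η η' : ℂ) (w x y z : ZMod 3), y ≠ z → ∀ ζ ζ' : ℂ,
      (Jz z - Jz y) * S ζ ζ' = Jz x * S η η' - Jz w → S ζ ζ' = M η η' w x y z) := by
  refine ⟨fun y z hyz => isUnit_Jz_sub_Jz_add_cyclicMean hyz,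
    fun η η' w x y z hyz ζ ζ' h => (isUnit_Jz_sub_Jz_add_cyclicMean hyz).mul_left_cancel ?_⟩
  calc (Jz z - Jz y + cyclicMean) * S ζ ζ'
      = Jz x * S η η' - Jz w + cyclicMean := by rw [add_mul, h, cyclicMean_mul_S]
    _ = (Jz z - Jz y + cyclicMean) * M η η' w x y z :=
        (Jz_sub_Jz_add_cyclicMean_mul_M η η' w x hyz).symm
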